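/- arXiv:math-ph/0402014 — 4 statements merged into one kernel-verified Lean document; each statement's English description precedes it below -/
import Mathlib

section
/- Let K ≥ 2 be an integer, μ ∈ ℂ with Im μ > 0, and γ ∈ ℂ such that θ_{[00]}(γ;μ) ≠ 0 and θ_{[AB]}(0;μ) ≠ 0 for all 0 ≤ A,B ≤ K−1 with (A,B) ≠ (0,0). Then the elliptic r-matrix satisfies the two periodicity properties r(γ+1;μ) = (F⁻¹ ⊗ I)·r(γ;μ)·(F ⊗ I) and r(γ+μ;μ) = (H ⊗ I)·r(γ;μ)·(H⁻¹ ⊗ I), where I is the K×K identity matrix. -/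
open Complex Filter

/-- Theta function with characteristics `p, q`. -/
noncomputable def Theta (p q : ℝ) (γ μ : ℂ) : ℂ :=
  ∑' m : ℤ, Complex.exp ((Real.pi : ℂ) * Complex.I * μ * ((m : ℂ) + (p : ℂ))^2
    + 2 * (Real.pi : ℂ) * Complex.I * ((m : ℂ) + (p : ℂ)) * (γ + (q : ℂ)))

/-- The Jacobi theta function `θ₁`. -/
noncomputable def theta1 (γ μ : ℂ) : ℂ := -Theta (1/2) (1/2) γ μ

/-- Logarithmic derivative of `θ₁` in the first argument. -/
noncomputable def rho (γ μ : ℂ) : ℂ := deriv (fun z => theta1 z μ) γ / theta1 γ μ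

/-- `θ_{[AB]}`, theta with characteristics `A/K - 1/2`, `1/2 - B/K`. -/
noncomputable def thetaAB (K : ℕ) (A B : ℤ) (γ μ : ℂ) : ℂ :=
  Theta ((A : ℝ)/(K : ℝ) - 1/2) (1/2 - (B : ℝ)/(K : ℝ)) γ μ

/-- The coefficients `w_{AB}` of the elliptic r-matrix. -/
noncomputable def wAB (K : ℕ) (A B : ℤ) (γ μ : ℂ) : ℂ :=
  thetaAB K A B γ μ * deriv (fun z => thetaAB K 0 0 z μ) 0
    / (thetaAB K A B 0 μ * thetaAB K 0 0 γ μ)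

/-- The functions `Z_{AB}`. -/
noncomputable def ZAB (K : ℕ) (A B : ℤ) (γ μ : ℂ) : ℂ :=
  wAB K A B γ μ / (2 * (Real.pi : ℂ) * Complex.I) *
    (deriv (fun z => thetaAB K A B z μ) γ / thetaAB K A B γ μ
      - deriv (fun z => thetaAB K A B z μ) 0 / thetaAB K A B 0 μ)

/-- `ε = exp(2πi/K)`. -/
noncomputable def epsK (K : ℕ) : ℂ := Complex.exp (2 * (Real.pi : ℂ) * Complex.I / (K : ℂ))

/-- The diagonal matrix `F = diag(1, ε, …, ε^{K-1})`. -/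
noncomputable def Fmat (K : ℕ) : Matrix (Fin K) (Fin K) ℂ :=
  Matrix.diagonal (fun i => epsK K ^ (i : ℕ))

/-- The cyclic permutation matrix `H`. -/
def Hmat (K : ℕ) : Matrix (Fin K) (Fin K) ℂ :=
  Matrix.of fun i j => if (j : ℕ) = ((i : ℕ) + 1) % K then 1 else 0

/-- `σ_{AB} = H^A F^B` (indices taken mod `K`, using `H^K = F^K = 1`). -/
noncomputable def sigmaAB (K : ℕ) (A B : ℤ) : Matrix (Fin K) (Fin K) ℂ :=
  Hmat K ^ ((A % (K : ℤ)).toNat) * Fmat K ^ ((B % (K : ℤ)).toNat)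

/-- The dual basis `σ^{AB} = (ε^{-AB}/K)·σ_{-A,-B}`. -/
noncomputable def sigmaDualAB (K : ℕ) (A B : ℤ) : Matrix (Fin K) (Fin K) ℂ :=
  (epsK K ^ (-(A * B)) / (K : ℂ)) • sigmaAB K (-A) (-B)

open Kronecker in
/-- The elliptic r-matrix. -/
noncomputable def rmat (K : ℕ) (γ μ : ℂ) : Matrix (Fin K × Fin K) (Fin K × Fin K) ℂ :=
  ∑ A ∈ Finset.range K, ∑ B ∈ Finset.range K,
    if A = 0 ∧ B = 0 then 0
    else wAB K A B γ μ • (sigmaAB K A B ⊗ₖ sigmaDualAB K A B)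

/-!
Under `γ ↦ γ + 1` and `γ ↦ γ + μ` the function `θ_{[AB]}` picks up the factors `-ε^A` and
`-ε^B e(γ)`, where `e(γ)` does not depend on `(A, B)`. The common parts cancel in the quotient
`w_{AB}`, leaving `ε^A` and `ε^B`. Since `H F = ε F H`, these are exactly the eigenvalues of
`σ_{AB} = H^A F^B` under conjugation by `F⁻¹` and by `H`, so each summand of the r-matrix is
shifted and conjugated in the same way.
-/

section ThetaFunctions

variable (K : ℕ) (A B : ℤ) (p q : ℝ) (γ μ : ℂ)

theorem Theta_eq_exp_mul_jacobiTheta₂ :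
    Theta p q γ μ =
      exp (Real.pi * I * μ * p ^ 2 + 2 * Real.pi * I * p * (γ + q))
        * jacobiTheta₂ (γ + q + p * μ) μ := by
  rw [Theta, jacobiTheta₂, ← tsum_mul_left]
  refine tsum_congr fun m => ?_
  rw [jacobiTheta₂_term, ← exp_add]
  ring_nf

theorem Theta_add_one : Theta p q (γ + 1) μ = exp (2 * Real.pi * I * p) * Theta p q γ μ := by
  have harg : γ + 1 + q + p * μ = γ + q + p * μ + 1 := by ring
  rw [Theta_eq_exp_mul_jacobiTheta₂, Theta_eq_exp_mul_jacobiTheta₂, harg, jacobiTheta₂_add_left,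
    ← mul_assoc, ← exp_add]
  ring_nf

theorem Theta_add_mu :
    Theta p q (γ + μ) μ = exp (-(Real.pi * I * (μ + 2 * (γ + q)))) * Theta p q γ μ := by
  have harg : γ + μ + q + p * μ = γ + q + p * μ + μ := by ring
  rw [Theta_eq_exp_mul_jacobiTheta₂, Theta_eq_exp_mul_jacobiTheta₂, harg, jacobiTheta₂_add_left',
    ← mul_assoc, ← mul_assoc, ← exp_add, ← exp_add]
  ring_nf

theorem epsK_zpow (n : ℤ) : epsK K ^ n = exp (2 * Real.pi * I * (n / K)) := by
  rw [epsK, ← exp_int_mul]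
  ring_nf

theorem thetaAB_add_one : thetaAB K A B (γ + 1) μ = -epsK K ^ A * thetaAB K A B γ μ := by
  have hfactor : exp (2 * Real.pi * I * ((A : ℝ) / (K : ℝ) - 1 / 2 : ℝ)) = -epsK K ^ A := by
    rw [epsK_zpow, ← exp_sub_pi_mul_I]
    push_cast
    ring_nf
  rw [thetaAB, Theta_add_one, hfactor, thetaAB]

theorem thetaAB_add_mu :
    thetaAB K A B (γ + μ) μ =
      -epsK K ^ B * exp (-(Real.pi * I * (μ + 2 * γ))) * thetaAB K A B γ μ := by
  have hfactor : exp (-(Real.pi * I * (μ + 2 * (γ + (1 / 2 - (B : ℝ) / (K : ℝ) : ℝ))))) =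
      -epsK K ^ B * exp (-(Real.pi * I * (μ + 2 * γ))) := by
    rw [epsK_zpow, ← exp_sub_pi_mul_I, ← exp_add]
    push_cast
    ring_nf
  rw [thetaAB, Theta_add_mu, hfactor, thetaAB]

theorem wAB_add_one : wAB K A B (γ + 1) μ = epsK K ^ A * wAB K A B γ μ := by
  simp only [wAB, thetaAB_add_one, zpow_zero]
  ring

theorem wAB_add_mu : wAB K A B (γ + μ) μ = epsK K ^ B * wAB K A B γ μ := by
  have hexp := exp_ne_zero (-(Real.pi * I * (μ + 2 * γ)))
  simp only [wAB, thetaAB_add_mu, zpow_zero]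
  field_simp

end ThetaFunctions

section ClockAndShift

variable (K : ℕ)

theorem epsK_ne_zero : epsK K ≠ 0 :=
  exp_ne_zero _

theorem isPrimitiveRoot_epsK [NeZero K] : IsPrimitiveRoot (epsK K) K :=
  isPrimitiveRoot_exp K (NeZero.ne K)

theorem epsK_pow_toNat_emod [NeZero K] (n : ℤ) : epsK K ^ (n % K).toNat = epsK K ^ n := by
  have hone : epsK K ^ (K : ℤ) = 1 := mod_cast (isPrimitiveRoot_epsK K).pow_eq_one
  rw [← zpow_natCast, Int.toNat_of_nonneg (Int.emod_nonneg n (NeZero.ne _))]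
  conv_rhs => rw [← Int.emod_add_mul_ediv n K, zpow_add₀ (epsK_ne_zero K), zpow_mul, hone,
    one_zpow, mul_one]

theorem isUnit_det_Fmat : IsUnit (Fmat K).det := by
  rw [Fmat, Matrix.det_diagonal, isUnit_iff_ne_zero, Finset.prod_ne_zero_iff]
  exact fun i _ => pow_ne_zero _ (epsK_ne_zero K)

theorem Hmat_eq_permMatrix_finRotate : Hmat K = (finRotate K).permMatrix ℂ := by
  ext i j
  have : NeZero K := i.neZero
  simp [Hmat, PEquiv.toMatrix_apply, Fin.ext_iff, Fin.val_add, eq_comm]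

theorem isUnit_det_Hmat : IsUnit (Hmat K).det := by
  rw [Hmat_eq_permMatrix_finRotate, Matrix.det_permutation]
  exact (Equiv.Perm.sign (finRotate K)).isUnit.map (Int.castRingHom ℂ)

theorem Hmat_mul_Fmat : Hmat K * Fmat K = epsK K • (Fmat K * Hmat K) := by
  ext i j
  have : NeZero K := i.neZero
  simp only [Fmat, Hmat, Matrix.mul_diagonal, Matrix.smul_apply, Matrix.diagonal_mul,
    Matrix.of_apply, smul_eq_mul]
  split_ifs with hij
  · rw [hij, ← pow_eq_pow_mod _ (isPrimitiveRoot_epsK K).pow_eq_one, pow_succ']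
    ring
  · simp

theorem semiconjBy_Hmat_Fmat : SemiconjBy (Hmat K) (Fmat K) (epsK K • Fmat K) := by
  rw [SemiconjBy, Hmat_mul_Fmat, smul_mul_assoc]

theorem semiconjBy_Fmat_Hmat : SemiconjBy (Fmat K) (epsK K • Hmat K) (Hmat K) := by
  rw [SemiconjBy, Hmat_mul_Fmat, mul_smul_comm]

variable [NeZero K] (A B : ℤ)

theorem semiconjBy_Fmat_sigmaAB :
    SemiconjBy (Fmat K) (epsK K ^ A • sigmaAB K A B) (sigmaAB K A B) := by
  have h := ((semiconjBy_Fmat_Hmat K).pow_right (A % K).toNat).mul_right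
    ((Commute.refl (Fmat K)).pow_right (B % K).toNat)
  rwa [smul_pow, epsK_pow_toNat_emod, smul_mul_assoc] at h

theorem semiconjBy_Hmat_sigmaAB :
    SemiconjBy (Hmat K) (sigmaAB K A B) (epsK K ^ B • sigmaAB K A B) := by
  have h := SemiconjBy.mul_right ((Commute.refl (Hmat K)).pow_right (A % K).toNat)
    ((semiconjBy_Hmat_Fmat K).pow_right (B % K).toNat)
  rwa [smul_pow, epsK_pow_toNat_emod, mul_smul_comm] at h

theorem Fmat_inv_mul_sigmaAB_mul_Fmat :
    (Fmat K)⁻¹ * sigmaAB K A B * Fmat K = epsK K ^ A • sigmaAB K A B := by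
  rw [mul_assoc, ← (semiconjBy_Fmat_sigmaAB K A B).eq,
    Matrix.nonsing_inv_mul_cancel_left _ _ (isUnit_det_Fmat K)]

theorem Hmat_mul_sigmaAB_mul_Hmat_inv :
    Hmat K * sigmaAB K A B * (Hmat K)⁻¹ = epsK K ^ B • sigmaAB K A B := by
  rw [(semiconjBy_Hmat_sigmaAB K A B).eq,
    Matrix.mul_nonsing_inv_cancel_right _ _ (isUnit_det_Hmat K)]

end ClockAndShift

open Kronecker in
theorem rmat_eq_kronecker_conj {K : ℕ} {γ γ' μ : ℂ} {P Q : Matrix (Fin K) (Fin K) ℂ}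
    (c : ℤ → ℤ → ℂ) (hw : ∀ A B, wAB K A B γ' μ = c A B * wAB K A B γ μ)
    (hσ : ∀ A B, P * sigmaAB K A B * Q = c A B • sigmaAB K A B) :
    rmat K γ' μ = (P ⊗ₖ (1 : Matrix (Fin K) (Fin K) ℂ)) * rmat K γ μ
      * (Q ⊗ₖ (1 : Matrix (Fin K) (Fin K) ℂ)) := by
  have hterm (A B : ℤ) : wAB K A B γ' μ • (sigmaAB K A B ⊗ₖ sigmaDualAB K A B) =
      (P ⊗ₖ 1) * (wAB K A B γ μ • (sigmaAB K A B ⊗ₖ sigmaDualAB K A B)) * (Q ⊗ₖ 1) := by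
    rw [mul_smul_comm, smul_mul_assoc, ← Matrix.mul_kronecker_mul, ← Matrix.mul_kronecker_mul,
      hσ, one_mul, mul_one, Matrix.smul_kronecker, smul_smul, hw, mul_comm]
  simp only [rmat, hterm, Finset.mul_sum, Finset.sum_mul, mul_ite, ite_mul, mul_zero, zero_mul]

open Kronecker in
/-- periodicity of the elliptic r-matrix:
`r(γ+1) = (F⁻¹⊗I)·r(γ)·(F⊗I)` and `r(γ+μ) = (H⊗I)·r(γ)·(H⁻¹⊗I)`. -/
theorem rmat_periodicity (K : ℕ) (hK : 2 ≤ K) (μ γ : ℂ) (hμ : 0 < μ.im)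
    (h00 : thetaAB K 0 0 γ μ ≠ 0)
    (h0 : ∀ A B : ℕ, A < K → B < K → ¬(A = 0 ∧ B = 0) → thetaAB K A B 0 μ ≠ 0) :
    rmat K (γ + 1) μ
      = ((Fmat K)⁻¹ ⊗ₖ (1 : Matrix (Fin K) (Fin K) ℂ)) * rmat K γ μ
          * (Fmat K ⊗ₖ (1 : Matrix (Fin K) (Fin K) ℂ)) ∧
    rmat K (γ + μ) μ
      = (Hmat K ⊗ₖ (1 : Matrix (Fin K) (Fin K) ℂ)) * rmat K γ μ
          * ((Hmat K)⁻¹ ⊗ₖ (1 : Matrix (Fin K) (Fin K) ℂ)) := by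
  have : NeZero K := ⟨by omega⟩
  constructor
  · exact rmat_eq_kronecker_conj (fun A _ => epsK K ^ A)
      (fun A B => wAB_add_one K A B γ μ) (Fmat_inv_mul_sigmaAB_mul_Fmat K)
  · exact rmat_eq_kronecker_conj (fun _ B => epsK K ^ B)
      (fun A B => wAB_add_mu K A B γ μ) (Hmat_mul_sigmaAB_mul_Hmat_inv K)
end

section
/- For all p,q ∈ ℝ, the theta function with characteristics satisfies the heat equation: for every γ ∈ ℂ and every μ ∈ ℂ with Im μ > 0, the second derivative in γ and the first derivative in μ exist and ∂²θ[p,q](γ;μ)/∂γ² = 4πi·∂θ[p,q](γ;μ)/∂μ. -/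
open Complex Filter

/-!
With `κ = 4πi`, each exponential `exp (2πi n z + πi n² τ)` in the series of Mathlib's `jacobiTheta₂`
solves `∂²u/∂z² = κ ∂u/∂τ`, since `(2πi n)² = 4πi · πi n²`; locally uniform convergence passes this
on to the sum. The heat equation is invariant under the Galilean transformations
`u ↦ exp (κ p² τ / 4 + κ p (z + q) / 2) · u (z + q + p τ) τ`, and completing the square shows that
the one with parameters `p, q` carries `jacobiTheta₂` to the theta function with characteristics
`p, q`.
-/

/-- Holomorphic solutions of the heat equation `∂²u/∂z² = κ ∂u/∂τ` on `ℂ × Ω`. Existence of the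
second derivative in `z` is not a separate field, because `u` is entire in `z`
for each `τ ∈ Ω`. -/
structure IsHeatSolutionOn (κ : ℂ) (u : ℂ → ℂ → ℂ) (Ω : Set ℂ) : Prop where
  differentiableAt : ∀ z, ∀ τ ∈ Ω, DifferentiableAt ℂ (fun w : ℂ × ℂ ↦ u w.1 w.2) (z, τ)
  deriv_deriv : ∀ z, ∀ τ ∈ Ω, deriv (deriv (u · τ)) z = κ * deriv (u z) τ

/-- The Galilean transform of `u` with velocity `p` and translation `q`, for the heat equation
`∂²u/∂z² = κ ∂u/∂τ`. -/
noncomputable def galileanTransform (κ p q : ℂ) (u : ℂ → ℂ → ℂ) (z τ : ℂ) : ℂ :=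
  exp (κ / 4 * p ^ 2 * τ + κ / 2 * p * (z + q)) * u (z + q + p * τ) τ

section PartialDerivatives

variable {𝕜 F : Type*} [NontriviallyNormedField 𝕜] [NormedAddCommGroup F] [NormedSpace 𝕜 F]
  {u : 𝕜 → 𝕜 → F}

lemma hasDerivAt_fst_of_hasFDerivAt {u' : 𝕜 × 𝕜 →L[𝕜] F} {x y : 𝕜}
    (hu : HasFDerivAt (fun w : 𝕜 × 𝕜 ↦ u w.1 w.2) u' (x, y)) :
    HasDerivAt (u · y) (u' (1, 0)) x :=
  hu.comp_hasDerivAt (f := fun t ↦ (t, y)) x ((hasDerivAt_id x).prodMk (hasDerivAt_const x y))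

lemma hasDerivAt_snd_of_hasFDerivAt {u' : 𝕜 × 𝕜 →L[𝕜] F} {x y : 𝕜}
    (hu : HasFDerivAt (fun w : 𝕜 × 𝕜 ↦ u w.1 w.2) u' (x, y)) :
    HasDerivAt (u x) (u' (0, 1)) y :=
  hu.comp_hasDerivAt (f := fun t ↦ (x, t)) y ((hasDerivAt_const y x).prodMk (hasDerivAt_id y))

lemma hasDerivAt_comp_curve {f g : 𝕜 → 𝕜} {f' g' t : 𝕜}
    (hu : DifferentiableAt 𝕜 (fun w : 𝕜 × 𝕜 ↦ u w.1 w.2) (f t, g t))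
    (hf : HasDerivAt f f' t) (hg : HasDerivAt g g' t) :
    HasDerivAt (fun s ↦ u (f s) (g s))
      (f' • deriv (u · (g t)) (f t) + g' • deriv (u (f t)) (g t)) t := by
  rw [(hasDerivAt_fst_of_hasFDerivAt hu.hasFDerivAt).deriv,
    (hasDerivAt_snd_of_hasFDerivAt hu.hasFDerivAt).deriv, ← map_smul, ← map_smul, ← map_add]
  have hbasis : f' • ((1, 0) : 𝕜 × 𝕜) + g' • (0, 1) = (f', g') := by simp
  rw [hbasis]
  exact hu.hasFDerivAt.comp_hasDerivAt (f := fun s ↦ (f s, g s)) t (hf.prodMk hg)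

end PartialDerivatives

namespace IsHeatSolutionOn

variable {κ : ℂ} {u : ℂ → ℂ → ℂ} {Ω : Set ℂ}

lemma differentiable_fst (hu : IsHeatSolutionOn κ u Ω) {τ : ℂ} (hτ : τ ∈ Ω) :
    Differentiable ℂ (u · τ) := fun z ↦
  (hasDerivAt_fst_of_hasFDerivAt (hu.differentiableAt z τ hτ).hasFDerivAt).differentiableAt

lemma differentiableAt_snd (hu : IsHeatSolutionOn κ u Ω) (z : ℂ) {τ : ℂ} (hτ : τ ∈ Ω) :
    DifferentiableAt ℂ (u z) τ :=
  (hasDerivAt_snd_of_hasFDerivAt (hu.differentiableAt z τ hτ).hasFDerivAt).differentiableAt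

end IsHeatSolutionOn

section GalileanTransform

variable {κ : ℂ} {u : ℂ → ℂ → ℂ}

lemma differentiableAt_galileanTransform (p q : ℂ) {z τ : ℂ}
    (hu : DifferentiableAt ℂ (fun w : ℂ × ℂ ↦ u w.1 w.2) (z + q + p * τ, τ)) :
    DifferentiableAt ℂ (fun w : ℂ × ℂ ↦ galileanTransform κ p q u w.1 w.2) (z, τ) := by
  have hcomp : DifferentiableAt ℂ (fun w : ℂ × ℂ ↦ u (w.1 + q + p * w.2) w.2) (z, τ) :=
    hu.comp (z, τ) (f := fun w : ℂ × ℂ ↦ (w.1 + q + p * w.2, w.2)) (by fun_prop)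
  exact DifferentiableAt.mul (by fun_prop) hcomp

lemma deriv_galileanTransform_fst (p q : ℂ) {τ : ℂ} (hu : Differentiable ℂ (u · τ)) :
    deriv (galileanTransform κ p q u · τ) =
      (galileanTransform κ p q (fun x t ↦ κ / 2 * p * u x t + deriv (u · t) x) · τ) := by
  funext z
  have hexp : HasDerivAt (fun x ↦ exp (κ / 4 * p ^ 2 * τ + κ / 2 * p * (x + q)))
      (exp (κ / 4 * p ^ 2 * τ + κ / 2 * p * (z + q)) * (κ / 2 * p)) z := by
    simpa only [mul_one] using
      ((((hasDerivAt_id' z).add_const q).const_mul (κ / 2 * p)).const_add _).cexp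
  have hshift : HasDerivAt (fun x ↦ u (x + q + p * τ) τ) (deriv (u · τ) (z + q + p * τ)) z := by
    simpa only [add_assoc] using
      (hu (z + (q + p * τ))).hasDerivAt.comp_add_const z (q + p * τ)
  refine (hexp.mul hshift).deriv.trans ?_
  simp only [galileanTransform]
  ring

lemma deriv_galileanTransform_snd (p q : ℂ) {z τ : ℂ}
    (hu : DifferentiableAt ℂ (fun w : ℂ × ℂ ↦ u w.1 w.2) (z + q + p * τ, τ)) :
    deriv (galileanTransform κ p q u z) τ =
      galileanTransform κ p q
        (fun x t ↦ κ / 4 * p ^ 2 * u x t + p * deriv (u · t) x + deriv (u x) t) z τ := by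
  have hexp : HasDerivAt (fun t ↦ exp (κ / 4 * p ^ 2 * t + κ / 2 * p * (z + q)))
      (exp (κ / 4 * p ^ 2 * τ + κ / 2 * p * (z + q)) * (κ / 4 * p ^ 2)) τ := by
    simpa only [mul_one] using
      (((hasDerivAt_id' τ).const_mul (κ / 4 * p ^ 2)).add_const _).cexp
  have hline : HasDerivAt (fun t ↦ z + q + p * t) p τ := by
    simpa only [mul_one] using ((hasDerivAt_id' τ).const_mul p).const_add (z + q)
  refine (hexp.mul (hasDerivAt_comp_curve hu hline (hasDerivAt_id' τ))).deriv.trans ?_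
  simp only [galileanTransform, smul_eq_mul]
  ring

theorem IsHeatSolutionOn.galileanTransform {Ω : Set ℂ} (hu : IsHeatSolutionOn κ u Ω) (p q : ℂ) :
    IsHeatSolutionOn κ (galileanTransform κ p q u) Ω where
  differentiableAt _ τ hτ := differentiableAt_galileanTransform p q (hu.differentiableAt _ τ hτ)
  deriv_deriv z τ hτ := by
    have hu₁ : Differentiable ℂ (u · τ) := hu.differentiable_fst hτ
    have hu₂ : Differentiable ℂ (deriv (u · τ)) := hu₁.deriv
    have hsum (x : ℂ) : deriv (fun x ↦ κ / 2 * p * u x τ + deriv (u · τ) x) x =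
        κ / 2 * p * deriv (u · τ) x + κ * deriv (u x) τ := by
      rw [deriv_fun_add ((hu₁ x).const_mul _) (hu₂ x), deriv_const_mul _ (hu₁ x),
        hu.deriv_deriv x τ hτ]
    rw [deriv_galileanTransform_fst p q hu₁,
      deriv_galileanTransform_fst p q ((hu₁.const_mul _).add hu₂),
      deriv_galileanTransform_snd p q (hu.differentiableAt _ τ hτ)]
    simp only [_root_.galileanTransform, hsum]
    ring

end GalileanTransform

lemma hasDerivAt_jacobiTheta₂'_term_fst (n : ℤ) (z τ : ℂ) :
    HasDerivAt (jacobiTheta₂'_term n · τ)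
      (4 * Real.pi * I * jacobiTheta₂_term_fderiv n z τ (0, 1)) z := by
  refine ((hasDerivAt_fst_of_hasFDerivAt
    (hasFDerivAt_jacobiTheta₂_term n z τ)).const_mul (2 * Real.pi * I * n)).congr_deriv ?_
  simp only [jacobiTheta₂_term_fderiv, smul_add, add_apply, smul_apply, smul_eq_mul,
    ContinuousLinearMap.coe_fst', ContinuousLinearMap.coe_snd', mul_one, mul_zero, add_zero,
    zero_add]
  ring

lemma hasSum_jacobiTheta₂_term_fderiv_apply (z : ℂ) {τ : ℂ} (hτ : 0 < τ.im) (w : ℂ × ℂ) :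
    HasSum (fun n ↦ jacobiTheta₂_term_fderiv n z τ w) (jacobiTheta₂_fderiv z τ w) :=
  (hasSum_jacobiTheta₂_term_fderiv z hτ).mapL (ContinuousLinearMap.apply ℂ ℂ w)

lemma deriv_jacobiTheta₂'_fst (z : ℂ) {τ : ℂ} (hτ : 0 < τ.im) :
    deriv (jacobiTheta₂' · τ) z = 4 * Real.pi * I * jacobiTheta₂_fderiv z τ (0, 1) := by
  obtain ⟨S, hS⟩ := exists_gt |z.im|
  have hopen : IsOpen {x : ℂ | |x.im| < S} := isOpen_lt (by fun_prop) continuous_const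
  have hbound : Summable fun n : ℤ ↦
      2 * Real.pi * |n| * Real.exp (-Real.pi * (τ.im * n ^ 2 - 2 * S * |n|)) := by
    simpa only [mul_assoc, pow_one] using
      (summable_pow_mul_jacobiTheta₂_term_bound S hτ 1).mul_left (2 * Real.pi)
  have hderiv : HasSum (fun n ↦ deriv (jacobiTheta₂'_term n · τ) z)
      (deriv (jacobiTheta₂' · τ) z) :=
    hasSum_deriv_of_summable_norm hbound
      (fun n x _ ↦
        (hasDerivAt_jacobiTheta₂'_term_fst n x τ).differentiableAt.differentiableWithinAt)
      hopen (fun n _ hx ↦ norm_jacobiTheta₂'_term_le hτ (le_of_lt hx) le_rfl n) hS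
  simp only [(hasDerivAt_jacobiTheta₂'_term_fst _ z τ).deriv] at hderiv
  exact hderiv.unique ((hasSum_jacobiTheta₂_term_fderiv_apply z hτ (0, 1)).mul_left _)

theorem isHeatSolutionOn_jacobiTheta₂ :
    IsHeatSolutionOn (4 * Real.pi * I) jacobiTheta₂ {τ | 0 < τ.im} where
  differentiableAt z _ hτ := (hasFDerivAt_jacobiTheta₂ z hτ).differentiableAt
  deriv_deriv z τ hτ := by
    have hfst : deriv (jacobiTheta₂ · τ) = (jacobiTheta₂' · τ) :=
      funext fun x ↦ (hasDerivAt_jacobiTheta₂_fst x hτ).deriv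
    rw [hfst, deriv_jacobiTheta₂'_fst z hτ,
      (hasDerivAt_snd_of_hasFDerivAt (hasFDerivAt_jacobiTheta₂ z hτ)).deriv]

lemma Theta_eq_galileanTransform_jacobiTheta₂ (p q : ℝ) :
    Theta p q = galileanTransform (4 * Real.pi * I) p q jacobiTheta₂ := by
  funext γ μ
  rw [Theta, galileanTransform, jacobiTheta₂, ← tsum_mul_left]
  refine tsum_congr fun m ↦ ?_
  rw [jacobiTheta₂_term, ← exp_add]
  ring_nf

/-- the heat equation `∂²_γ θ[p,q] = 4πi·∂_μ θ[p,q]`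
(both derivatives exist). -/
theorem theta_heat_equation (p q : ℝ) (γ μ : ℂ) (hμ : 0 < μ.im) :
    DifferentiableAt ℂ (fun z => Theta p q z μ) γ ∧
    DifferentiableAt ℂ (deriv (fun z => Theta p q z μ)) γ ∧
    DifferentiableAt ℂ (fun m => Theta p q γ m) μ ∧
    deriv (deriv (fun z => Theta p q z μ)) γ
      = 4 * (Real.pi : ℂ) * Complex.I * deriv (fun m => Theta p q γ m) μ := by
  have hΘ : IsHeatSolutionOn (4 * Real.pi * I) (Theta p q) {τ | 0 < τ.im} := by
    rw [Theta_eq_galileanTransform_jacobiTheta₂]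
    exact isHeatSolutionOn_jacobiTheta₂.galileanTransform p q
  have hγ : Differentiable ℂ (fun z => Theta p q z μ) := hΘ.differentiable_fst hμ
  exact ⟨hγ γ, hγ.deriv γ, hΘ.differentiableAt_snd γ hμ, hΘ.deriv_deriv γ μ hμ⟩
end

section
/- Let K ≥ 2 be an integer and A,B integers with (A,B) not both ≡ 0 mod K. At every point (γ;μ) with Im μ > 0, θ_{[00]}(γ;μ) ≠ 0, θ_{[AB]}(γ;μ) ≠ 0 and θ_{[AB]}(0;μ) ≠ 0, the derivative of w_{AB}(γ;μ) with respect to μ and the derivative of Z_{AB}(γ;μ) with respect to γ both exist and are equal: ∂_μ w_{AB}(γ;μ) = ∂_γ Z_{AB}(γ;μ). -/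
open Complex Filter

/-
Write `t` for the theta function in the numerator of `w` and `f` for the odd function `θ_{[00]}`.
The heat equation `4πi ∂_μ θ = ∂_γ² θ` turns the claim into a relation, linear in the Hirota
derivatives `D^n (t · f)` for `n ≤ 2`, whose coefficients are values of `t`, `f` and their
derivatives at `0`. By the addition formula, `t (x + y) * f (x - y)` is a sum of two products
`P_i x * Q_i y`, so its `y`-derivatives of orders `0, 1, 2` at `y = 0` are, as functions of `x`,
combinations of the two functions `P_i`: the `3 × 3` determinant formed from them at `x = γ`, at
`x = 0`, and from their `x`-derivatives at `x = 0` vanishes. This determinant is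
`t(0) ∂f(0)` times the relation.

The factor `∂f(0)` is cancelled without proving that it is nonzero: were the relation false at
`μ`, then `∂f(0)` would vanish for all nearby `μ`, hence by the heat equation so would `∂³f(0)`,
and with both of these zero the relation holds trivially.
-/

open scoped Real

/-- The `m`-th summand of the `k`-th derivative in `γ` of `Theta p q γ μ`. -/
noncomputable def thetaTerm (k : ℕ) (p q : ℝ) (γ μ : ℂ) (m : ℤ) : ℂ :=
  (2 * π * I * (m + p)) ^ k * exp (π * I * μ * (m + p) ^ 2 + 2 * π * I * (m + p) * (γ + q))

/-- The `k`-th derivative in `γ` of `Theta p q γ μ`, given by its termwise differentiated series. -/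
noncomputable def thetaDeriv (k : ℕ) (p q : ℝ) (γ μ : ℂ) : ℂ :=
  ∑' m : ℤ, thetaTerm k p q γ μ m

lemma Theta_eq_thetaDeriv_zero (p q : ℝ) (γ μ : ℂ) : Theta p q γ μ = thetaDeriv 0 p q γ μ := by
  simp only [Theta, thetaDeriv, thetaTerm, pow_zero, one_mul]

section Convergence

variable (k : ℕ) (p q : ℝ)

lemma norm_thetaTerm (γ μ : ℂ) (m : ℤ) :
    ‖thetaTerm k p q γ μ m‖ =
      (2 * π * |m + p|) ^ k * Real.exp (-π * (μ.im * (m + p) ^ 2 + 2 * γ.im * (m + p))) := by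
  have hx : (m + p : ℂ) = ((m + p : ℝ) : ℂ) := by push_cast; rfl
  rw [thetaTerm, hx, norm_mul, norm_pow, Complex.norm_exp]
  generalize (m + p : ℝ) = x
  congr 1
  · simp [abs_of_pos Real.pi_pos]
  · rw [← ofReal_pow]
    simp only [add_re, add_im, mul_re, mul_im, ofReal_re, ofReal_im, I_re, I_im, re_ofNat, im_ofNat]
    ring_nf

-- The polynomial factor is absorbed by `y ^ k ≤ k! * exp y`, i.e. by replacing `S` with `S + 1`.
lemma norm_thetaTerm_le {S T : ℝ} {γ μ : ℂ} (hγ : |γ.im| ≤ S) (hμ : T ≤ μ.im) (m : ℤ) :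
    ‖thetaTerm k p q γ μ m‖ ≤
      k.factorial * Real.exp (-π * (T * (m + p) ^ 2 - 2 * (S + 1) * |m + p|)) := by
  rw [norm_thetaTerm]
  generalize (m + p : ℝ) = x
  have hpow : (2 * π * |x|) ^ k ≤ k.factorial * Real.exp (2 * π * |x|) := by
    rw [← div_le_iff₀' (by positivity)]
    exact Real.pow_div_factorial_le_exp (2 * π * |x|) (by positivity) k
  have hlin : -(γ.im * x) ≤ S * |x| :=
    calc -(γ.im * x) ≤ |γ.im| * |x| := by rw [← abs_mul]; exact neg_le_abs _
      _ ≤ S * |x| := by gcongr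
  have hquad : T * x ^ 2 ≤ μ.im * x ^ 2 := by gcongr
  have hexp : 2 * π * |x| + -π * (μ.im * x ^ 2 + 2 * γ.im * x) ≤
      -π * (T * x ^ 2 - 2 * (S + 1) * |x|) := by
    nlinarith [Real.pi_pos]
  calc (2 * π * |x|) ^ k * Real.exp (-π * (μ.im * x ^ 2 + 2 * γ.im * x))
      ≤ k.factorial * Real.exp (2 * π * |x|) * Real.exp (-π * (μ.im * x ^ 2 + 2 * γ.im * x)) := by
        gcongr
    _ = k.factorial * Real.exp (2 * π * |x| + -π * (μ.im * x ^ 2 + 2 * γ.im * x)) := by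
        rw [Real.exp_add, mul_assoc]
    _ ≤ k.factorial * Real.exp (-π * (T * x ^ 2 - 2 * (S + 1) * |x|)) := by gcongr

lemma summable_exp_neg_quadratic_add (S : ℝ) {T : ℝ} (hT : 0 < T) :
    Summable fun m : ℤ => Real.exp (-π * (T * (m + p) ^ 2 - 2 * S * |m + p|)) := by
  have hS := ((summable_pow_mul_jacobiTheta₂_term_bound (|S| + T * |p|) hT 0).mul_left
    (Real.exp (π * (2 * |S| * |p|))))
  refine hS.of_nonneg_of_le (fun m => (Real.exp_pos _).le) fun m => ?_
  rw [pow_zero, one_mul, ← Real.exp_add, Real.exp_le_exp]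
  push_cast
  have hcross : -(|(m : ℝ)| * |p|) ≤ m * p := by rw [← abs_mul]; exact neg_abs_le _
  have hshift : S * |m + p| ≤ |S| * (|(m : ℝ)| + |p|) :=
    mul_le_mul (le_abs_self S) (abs_add_le _ _) (abs_nonneg _) (abs_nonneg _)
  have key : T * m ^ 2 - 2 * (|S| + T * |p|) * |(m : ℝ)| - 2 * |S| * |p| ≤
      T * (m + p) ^ 2 - 2 * S * |m + p| := by
    nlinarith [mul_le_mul_of_nonneg_left hcross hT.le, mul_nonneg hT.le (sq_nonneg p)]
  nlinarith [mul_le_mul_of_nonneg_left key Real.pi_pos.le]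

lemma exists_summable_norm_thetaTerm_le (S : ℝ) {T : ℝ} (hT : 0 < T) :
    ∃ u : ℤ → ℝ, Summable u ∧
      ∀ γ μ : ℂ, |γ.im| ≤ S → T ≤ μ.im → ∀ m, ‖thetaTerm k p q γ μ m‖ ≤ u m :=
  ⟨_, (summable_exp_neg_quadratic_add p (S + 1) hT).mul_left _,
    fun _ _ hγ hμ m => norm_thetaTerm_le k p q hγ hμ m⟩

lemma summable_norm_thetaTerm (γ : ℂ) {μ : ℂ} (hμ : 0 < μ.im) :
    Summable fun m => ‖thetaTerm k p q γ μ m‖ := by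
  obtain ⟨u, hu, hle⟩ := exists_summable_norm_thetaTerm_le k p q |γ.im| hμ
  exact hu.of_nonneg_of_le (fun _ => norm_nonneg _) (hle γ μ le_rfl le_rfl)

end Convergence

section Derivatives

variable (k : ℕ) (p q : ℝ)

lemma hasDerivAt_thetaTerm_gamma (γ μ : ℂ) (m : ℤ) :
    HasDerivAt (fun z => thetaTerm k p q z μ m) (thetaTerm (k + 1) p q γ μ m) γ := by
  have h := (((((hasDerivAt_id γ).add_const (q : ℂ)).const_mul (2 * π * I * (m + p))).const_add
    (π * I * μ * (m + p) ^ 2)).cexp).const_mul ((2 * π * I * (m + p)) ^ k)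
  refine h.congr_deriv ?_
  simp only [id, thetaTerm]
  ring

lemma hasDerivAt_thetaTerm_mu (γ μ : ℂ) (m : ℤ) :
    HasDerivAt (fun z => thetaTerm k p q γ z m)
      (thetaTerm (k + 2) p q γ μ m / (4 * π * I)) μ := by
  have h := (((((hasDerivAt_id μ).const_mul (π * I)).mul_const ((m + p : ℂ) ^ 2)).add_const
    (2 * π * I * (m + p) * (γ + q))).cexp).const_mul ((2 * π * I * (m + p)) ^ k)
  refine h.congr_deriv ?_
  have hπ : (π : ℂ) ≠ 0 := ofReal_ne_zero.mpr Real.pi_ne_zero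
  simp only [id, thetaTerm]
  field_simp
  ring

lemma hasDerivAt_thetaDeriv_gamma (γ : ℂ) {μ : ℂ} (hμ : 0 < μ.im) :
    HasDerivAt (fun z => thetaDeriv k p q z μ) (thetaDeriv (k + 1) p q γ μ) γ := by
  obtain ⟨u, hu, hle⟩ := exists_summable_norm_thetaTerm_le (k + 1) p q (|γ.im| + 1) hμ
  have him : ∀ z ∈ Metric.ball γ 1, |z.im| ≤ |γ.im| + 1 := fun z hz => by
    have hdist : |(z - γ).im| < 1 := (abs_im_le_norm _).trans_lt (mem_ball_iff_norm.mp hz)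
    rw [sub_im] at hdist
    linarith [abs_sub_abs_le_abs_sub z.im γ.im]
  exact hasDerivAt_tsum_of_isPreconnected hu Metric.isOpen_ball
    (convex_ball γ 1).isPreconnected (fun m z _ => hasDerivAt_thetaTerm_gamma k p q z μ m)
    (fun m z hz => hle z μ (him z hz) le_rfl m) (Metric.mem_ball_self one_pos)
    (summable_norm_thetaTerm k p q γ hμ).of_norm (Metric.mem_ball_self one_pos)

lemma hasDerivAt_thetaDeriv_mu (γ : ℂ) {μ : ℂ} (hμ : 0 < μ.im) :
    HasDerivAt (fun z => thetaDeriv k p q γ z) (thetaDeriv (k + 2) p q γ μ / (4 * π * I)) μ := by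
  obtain ⟨u, hu, hle⟩ := exists_summable_norm_thetaTerm_le (k + 2) p q |γ.im| (half_pos hμ)
  have hmem : μ ∈ {z : ℂ | μ.im / 2 < z.im} := half_lt_self hμ
  rw [thetaDeriv, ← tsum_div_const]
  refine hasDerivAt_tsum_of_isPreconnected (hu.div_const ‖(4 * π * I : ℂ)‖)
    (isOpen_lt continuous_const continuous_im) (convex_halfSpace_im_gt _).isPreconnected
    (fun m z _ => hasDerivAt_thetaTerm_mu k p q γ z m) (fun m z hz => ?_) hmem
    (summable_norm_thetaTerm k p q γ hμ).of_norm hmem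
  rw [norm_div]
  gcongr
  exact hle γ z le_rfl (le_of_lt hz) m

lemma continuousAt_thetaDeriv_mu (γ : ℂ) {μ : ℂ} (hμ : 0 < μ.im) :
    ContinuousAt (fun z => thetaDeriv k p q γ z) μ :=
  (hasDerivAt_thetaDeriv_mu k p q γ hμ).continuousAt

lemma deriv_Theta (γ : ℂ) {μ : ℂ} (hμ : 0 < μ.im) :
    deriv (fun z => Theta p q z μ) γ = thetaDeriv 1 p q γ μ := by
  simp only [Theta_eq_thetaDeriv_zero, (hasDerivAt_thetaDeriv_gamma 0 p q γ hμ).deriv]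

end Derivatives

section Characteristics

variable (k : ℕ) (p q : ℝ) (γ μ : ℂ)

lemma thetaDeriv_neg :
    thetaDeriv k (-p) (-q) (-γ) μ = (-1) ^ k * thetaDeriv k p q γ μ := by
  rw [thetaDeriv, thetaDeriv, ← tsum_mul_left, ← (Equiv.neg ℤ).tsum_eq]
  refine tsum_congr fun m => ?_
  simp only [thetaTerm, Equiv.neg_apply, ← mul_assoc, ← mul_pow]
  congr 2 <;> push_cast <;> ring

lemma thetaDeriv_add_one_left : thetaDeriv k (p + 1) q γ μ = thetaDeriv k p q γ μ := by
  rw [thetaDeriv, thetaDeriv, ← (Equiv.addRight (1 : ℤ)).tsum_eq (thetaTerm k p q γ μ)]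
  refine tsum_congr fun m => ?_
  simp only [thetaTerm, Equiv.coe_addRight]
  congr 2 <;> push_cast <;> ring

lemma thetaDeriv_add_one_right :
    thetaDeriv k p (q + 1) γ μ = exp (2 * π * I * p) * thetaDeriv k p q γ μ := by
  rw [thetaDeriv, thetaDeriv, ← tsum_mul_left]
  refine tsum_congr fun m => ?_
  have hexp : (π * I * μ * (m + p) ^ 2 + 2 * π * I * (m + p) * (γ + (q + 1 : ℝ)) : ℂ) =
      π * I * μ * (m + p) ^ 2 + 2 * π * I * (m + p) * (γ + q) + 2 * π * I * p
        + m * (2 * π * I) := by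
    push_cast; ring
  rw [thetaTerm, thetaTerm, hexp, exp_add, exp_int_mul_two_pi_mul_I, exp_add]
  ring

/-- The `k`-th derivative in `γ` of the odd theta function `θ_{[00]} = -θ₁`. -/
noncomputable def oddThetaDeriv : ℂ := thetaDeriv k (-(1 / 2)) (1 / 2) γ μ

lemma oddThetaDeriv_neg : oddThetaDeriv k (-γ) μ = (-1) ^ (k + 1) * oddThetaDeriv k γ μ := by
  have hp : (-(1 / 2) + 1 : ℝ) = 1 / 2 := by norm_num
  calc oddThetaDeriv k (-γ) μ
      = (-1) ^ k * thetaDeriv k (1 / 2) (-(1 / 2)) γ μ := by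
        rw [← thetaDeriv_neg, neg_neg, oddThetaDeriv]
    _ = (-1) ^ k * thetaDeriv k (-(1 / 2)) (-(1 / 2)) γ μ := by
        rw [← thetaDeriv_add_one_left k (-(1 / 2)), hp]
    _ = (-1) ^ (k + 1) * oddThetaDeriv k γ μ := by
        have hexp : exp (2 * π * I * (-(1 / 2) : ℝ)) = -1 := by
          have harg : 2 * π * I * ((-(1 / 2) : ℝ) : ℂ) = -(π * I) := by push_cast; ring
          rw [harg, exp_neg_pi_mul_I]
        have h := thetaDeriv_add_one_right k (-(1 / 2)) (-(1 / 2)) γ μ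
        rw [hp, hexp] at h
        rw [oddThetaDeriv, h]
        ring

lemma oddThetaDeriv_zero_of_even (hk : Even k) : oddThetaDeriv k 0 μ = 0 := by
  have h := oddThetaDeriv_neg k 0 μ
  rw [neg_zero, hk.add_one.neg_one_pow, neg_one_mul] at h
  exact self_eq_neg.mp h

end Characteristics

section AdditionFormula

/-- The decomposition of `ℤ × ℤ` into the pairs of equal parity, written `(a + b, a - b)`, and the
pairs of opposite parity, written `(a + b + 1, a - b)`. -/
def parityEquiv : (ℤ × ℤ) ⊕ (ℤ × ℤ) ≃ ℤ × ℤ where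
  toFun := Sum.elim (fun a => (a.1 + a.2, a.1 - a.2)) (fun a => (a.1 + a.2 + 1, a.1 - a.2))
  invFun a := if (a.1 + a.2) % 2 = 0 then Sum.inl ((a.1 + a.2) / 2, (a.1 - a.2) / 2)
    else Sum.inr ((a.1 + a.2 - 1) / 2, (a.1 - a.2 - 1) / 2)
  left_inv := by
    rintro (⟨a, b⟩ | ⟨a, b⟩) <;> grind
  right_inv := by
    rintro ⟨a, b⟩
    grind

theorem thetaDeriv_zero_add_mul_thetaDeriv_zero_sub (p q r s : ℝ) (x y : ℂ) {μ : ℂ}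
    (hμ : 0 < μ.im) :
    thetaDeriv 0 p q (x + y) μ * thetaDeriv 0 r s (x - y) μ =
      thetaDeriv 0 ((p + r) / 2) (q + s) (2 * x) (2 * μ) *
        thetaDeriv 0 ((p - r) / 2) (q - s) (2 * y) (2 * μ) +
      thetaDeriv 0 ((p + r + 1) / 2) (q + s) (2 * x) (2 * μ) *
        thetaDeriv 0 ((p - r + 1) / 2) (q - s) (2 * y) (2 * μ) := by
  have h2μ : 0 < (2 * μ).im := by simpa using hμ
  have hterms := fun p q γ => summable_norm_thetaTerm 0 p q γ hμ
  have hterms₂ := fun p q γ => summable_norm_thetaTerm 0 p q γ h2μ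
  have hsum := parityEquiv.summable_iff.mpr
    (summable_mul_of_summable_norm (hterms p q (x + y)) (hterms r s (x - y)))
  simp only [thetaDeriv]
  rw [tsum_mul_tsum_of_summable_norm (hterms _ _ _) (hterms _ _ _),
    tsum_mul_tsum_of_summable_norm (hterms₂ _ _ _) (hterms₂ _ _ _),
    tsum_mul_tsum_of_summable_norm (hterms₂ _ _ _) (hterms₂ _ _ _), ← parityEquiv.tsum_eq]
  refine (Summable.tsum_sum (hsum.comp_injective Sum.inl_injective)
    (hsum.comp_injective Sum.inr_injective)).trans ?_
  congr 1 <;> refine tsum_congr fun a => ?_ <;>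
  · simp only [Function.comp_apply, parityEquiv, Equiv.coe_fn_mk, Sum.elim_inl, Sum.elim_inr,
      thetaTerm, pow_zero, one_mul, ← exp_add]
    congr 1
    push_cast
    ring

end AdditionFormula

section HirotaDerivatives

variable {𝕜 : Type*} [NontriviallyNormedField 𝕜]

/-- The `n`-th Hirota bilinear derivative `D ^ n (t · f)` at `x`. -/
noncomputable def hirotaDeriv (n : ℕ) (t f : 𝕜 → 𝕜) (x : 𝕜) : 𝕜 :=
  iteratedDeriv n (fun y => t (x + y) * f (x - y)) 0

section Formulas

variable {t t₁ t₂ f f₁ f₂ : 𝕜 → 𝕜}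

lemma hirotaDeriv_zero (x : 𝕜) : hirotaDeriv 0 t f x = t x * f x := by
  simp only [hirotaDeriv, iteratedDeriv_zero, add_zero, sub_zero]

lemma hasDerivAt_add_mul_sub (ht : ∀ x, HasDerivAt t (t₁ x) x) (hf : ∀ x, HasDerivAt f (f₁ x) x)
    (x y : 𝕜) :
    HasDerivAt (fun y => t (x + y) * f (x - y))
      (t₁ (x + y) * f (x - y) - t (x + y) * f₁ (x - y)) y := by
  refine (((ht _).comp_const_add x y).mul ((hf _).comp_const_sub x y)).congr_deriv ?_
  ring

lemma hirotaDeriv_one (ht : ∀ x, HasDerivAt t (t₁ x) x) (hf : ∀ x, HasDerivAt f (f₁ x) x)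
    (x : 𝕜) : hirotaDeriv 1 t f x = t₁ x * f x - t x * f₁ x := by
  simp only [hirotaDeriv, iteratedDeriv_one, (hasDerivAt_add_mul_sub ht hf x 0).deriv, add_zero,
    sub_zero]

lemma hirotaDeriv_two (ht : ∀ x, HasDerivAt t (t₁ x) x) (ht₁ : ∀ x, HasDerivAt t₁ (t₂ x) x)
    (hf : ∀ x, HasDerivAt f (f₁ x) x) (hf₁ : ∀ x, HasDerivAt f₁ (f₂ x) x) (x : 𝕜) :
    hirotaDeriv 2 t f x = t₂ x * f x - 2 * (t₁ x * f₁ x) + t x * f₂ x := by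
  have hfirst : deriv (fun y => t (x + y) * f (x - y)) =
      fun y => t₁ (x + y) * f (x - y) - t (x + y) * f₁ (x - y) :=
    funext fun y => (hasDerivAt_add_mul_sub ht hf x y).deriv
  have hsecond := (hasDerivAt_add_mul_sub ht₁ hf x 0).sub (hasDerivAt_add_mul_sub ht hf₁ x 0)
  rw [hirotaDeriv, iteratedDeriv_succ, iteratedDeriv_one, hfirst]
  refine hsecond.deriv.trans ?_
  simp only [add_zero, sub_zero]
  ring

end Formulas

theorem det_fin_three_of_mul_add_mul {R : Type*} [CommRing R] (u v a b : Fin 3 → R) :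
    (Matrix.of fun i j => u i * a j + v i * b j).det = 0 := by
  rw [Matrix.det_fin_three]
  simp only [Matrix.of_apply]
  ring

variable {t f P₀ P₁ Q₀ Q₁ : 𝕜 → 𝕜}

lemma hirotaDeriv_eq_of_separated
    (hsep : ∀ x y, t (x + y) * f (x - y) = P₀ x * Q₀ y + P₁ x * Q₁ y) {n : ℕ}
    (hQ₀ : ContDiffAt 𝕜 n Q₀ 0) (hQ₁ : ContDiffAt 𝕜 n Q₁ 0) (x : 𝕜) :
    hirotaDeriv n t f x = P₀ x * iteratedDeriv n Q₀ 0 + P₁ x * iteratedDeriv n Q₁ 0 := by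
  simp only [hirotaDeriv, hsep]
  rw [iteratedDeriv_fun_add (contDiffAt_const.mul hQ₀) (contDiffAt_const.mul hQ₁)]
  simp only [iteratedDeriv_const_mul_field]

theorem det_hirotaDeriv_eq_zero
    (hsep : ∀ x y, t (x + y) * f (x - y) = P₀ x * Q₀ y + P₁ x * Q₁ y)
    (hQ₀ : ContDiffAt 𝕜 2 Q₀ 0) (hQ₁ : ContDiffAt 𝕜 2 Q₁ 0) {x₀ : 𝕜}
    (hP₀ : DifferentiableAt 𝕜 P₀ x₀) (hP₁ : DifferentiableAt 𝕜 P₁ x₀) (x : 𝕜) :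
    (Matrix.of ![fun j : Fin 3 => hirotaDeriv j t f x, fun j => hirotaDeriv j t f x₀,
      fun j => deriv (hirotaDeriv j t f) x₀]).det = 0 := by
  have hD : ∀ (j : Fin 3) (z : 𝕜), hirotaDeriv j t f z =
      P₀ z * iteratedDeriv j Q₀ 0 + P₁ z * iteratedDeriv j Q₁ 0 := fun j =>
    have hj : ((j : ℕ) : WithTop ℕ∞) ≤ 2 := by exact_mod_cast j.is_le
    hirotaDeriv_eq_of_separated hsep (hQ₀.of_le hj) (hQ₁.of_le hj)
  have hD' : ∀ j : Fin 3, deriv (hirotaDeriv j t f) x₀ =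
      deriv P₀ x₀ * iteratedDeriv j Q₀ 0 + deriv P₁ x₀ * iteratedDeriv j Q₁ 0 := fun j => by
    rw [funext (hD j)]
    exact ((hP₀.hasDerivAt.mul_const _).add (hP₁.hasDerivAt.mul_const _)).deriv
  rw [← det_fin_three_of_mul_add_mul ![P₀ x, P₀ x₀, deriv P₀ x₀] ![P₁ x, P₁ x₀, deriv P₁ x₀]
    (fun j => iteratedDeriv j Q₀ 0) (fun j => iteratedDeriv j Q₁ 0)]
  congr
  ext i j
  fin_cases i
  · exact hD j x
  · exact hD j x₀
  · exact hD' j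

end HirotaDerivatives

section HirotaRelation

/-- The combination of the Hirota derivatives of `t 0` and `f 0` at `x` that vanishes when `f 0`
is odd and `t 0 (x + y) * f 0 (x - y)` is a sum of two products, up to the factor `t 0 0 * f 1 0`;
`t k` and `f k` stand for `k`-th derivatives. -/
def hirotaDefect {R : Type*} [Ring R] (t f : ℕ → R → R) (x : R) : R :=
  t 0 0 * f 1 0 * (t 2 x * f 0 x - 2 * (t 1 x * f 1 x) + t 0 x * f 2 x) -
    2 * (t 1 0 * f 1 0) * (t 1 x * f 0 x - t 0 x * f 1 x) +
    (t 2 0 * f 1 0 - t 0 0 * f 3 0) * (t 0 x * f 0 x)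

theorem mul_hirotaDefect_eq_zero {𝕜 : Type*} [NontriviallyNormedField 𝕜] {t f : ℕ → 𝕜 → 𝕜}
    {P₀ P₁ Q₀ Q₁ : 𝕜 → 𝕜} (ht : ∀ k x, HasDerivAt (t k) (t (k + 1) x) x)
    (hf : ∀ k x, HasDerivAt (f k) (f (k + 1) x) x) (hf₀ : f 0 0 = 0) (hf₂ : f 2 0 = 0)
    (hsep : ∀ x y, t 0 (x + y) * f 0 (x - y) = P₀ x * Q₀ y + P₁ x * Q₁ y)
    (hQ₀ : ContDiffAt 𝕜 2 Q₀ 0) (hQ₁ : ContDiffAt 𝕜 2 Q₁ 0)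
    (hP₀ : DifferentiableAt 𝕜 P₀ 0) (hP₁ : DifferentiableAt 𝕜 P₁ 0) (x : 𝕜) :
    t 0 0 * f 1 0 * hirotaDefect t f x = 0 := by
  have hD₀ : hirotaDeriv 0 (t 0) (f 0) = fun x => t 0 x * f 0 x := funext hirotaDeriv_zero
  have hD₁ : hirotaDeriv 1 (t 0) (f 0) = fun x => t 1 x * f 0 x - t 0 x * f 1 x :=
    funext (hirotaDeriv_one (ht 0) (hf 0))
  have hD₂ : hirotaDeriv 2 (t 0) (f 0) =
      fun x => t 2 x * f 0 x - 2 * (t 1 x * f 1 x) + t 0 x * f 2 x :=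
    funext (hirotaDeriv_two (ht 0) (ht 1) (hf 0) (hf 1))
  have hmul : ∀ i j, HasDerivAt (fun x => t i x * f j x)
      (t (i + 1) 0 * f j 0 + t i 0 * f (j + 1) 0) 0 := fun i j => (ht i 0).mul (hf j 0)
  have hD₀' : deriv (hirotaDeriv 0 (t 0) (f 0)) 0 = t 0 0 * f 1 0 := by
    rw [hD₀, (hmul 0 0).deriv, hf₀, mul_zero, zero_add]
  have hD₁' : deriv (hirotaDeriv 1 (t 0) (f 0)) 0 = 0 := by
    rw [hD₁]
    exact ((hmul 1 0).sub (hmul 0 1)).deriv.trans (by rw [hf₀, hf₂]; ring)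
  have hD₂' : deriv (hirotaDeriv 2 (t 0) (f 0)) 0 = t 0 0 * f 3 0 - t 2 0 * f 1 0 := by
    rw [hD₂]
    exact (((hmul 2 0).sub ((hmul 1 1).const_mul 2)).add (hmul 0 2)).deriv.trans
      (by rw [hf₀, hf₂]; ring)
  have hdet := det_hirotaDeriv_eq_zero hsep hQ₀ hQ₁ hP₀ hP₁ x
  simp only [Matrix.det_fin_three, Matrix.of_apply, Matrix.cons_val, Fin.val_zero, Fin.val_one,
    Fin.val_two, hD₀', hD₁', hD₂'] at hdet
  simp only [hD₀, hD₁, hD₂, hf₀, hf₂] at hdet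
  rw [hirotaDefect]
  linear_combination hdet

end HirotaRelation

section ThetaDefect

/-- The Hirota defect of `Theta p q` and the odd theta function. -/
noncomputable def thetaDefect (p q : ℝ) (γ μ : ℂ) : ℂ :=
  hirotaDefect (fun k z => thetaDeriv k p q z μ) (fun k z => oddThetaDeriv k z μ) γ

variable (p q : ℝ) (γ : ℂ) {μ : ℂ}

lemma differentiable_thetaDeriv_gamma (hμ : 0 < μ.im) (k : ℕ) :
    Differentiable ℂ fun z => thetaDeriv k p q z μ :=
  fun z => (hasDerivAt_thetaDeriv_gamma k p q z hμ).differentiableAt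

lemma mul_thetaDefect_eq_zero (hμ : 0 < μ.im) :
    thetaDeriv 0 p q 0 μ * oddThetaDeriv 1 0 μ * thetaDefect p q γ μ = 0 := by
  have h2μ : 0 < (2 * μ).im := by simpa using hμ
  have hdouble : ∀ r s, Differentiable ℂ fun z => thetaDeriv 0 r s (2 * z) (2 * μ) := fun r s =>
    (differentiable_thetaDeriv_gamma r s h2μ 0).comp (differentiable_id.const_mul 2)
  exact mul_hirotaDefect_eq_zero (fun k z => hasDerivAt_thetaDeriv_gamma k p q z hμ)
    (fun k z => hasDerivAt_thetaDeriv_gamma k _ _ z hμ)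
    (oddThetaDeriv_zero_of_even 0 μ (by decide)) (oddThetaDeriv_zero_of_even 2 μ (by decide))
    (fun x y => thetaDeriv_zero_add_mul_thetaDeriv_zero_sub p q (-(1 / 2)) (1 / 2) x y hμ)
    (hdouble _ _).contDiff.contDiffAt (hdouble _ _).contDiff.contDiffAt
    (hdouble _ _ 0) (hdouble _ _ 0) γ

lemma continuousAt_thetaDefect_mu (hμ : 0 < μ.im) :
    ContinuousAt (fun z => thetaDefect p q γ z) μ := by
  have ht := fun k x => continuousAt_thetaDeriv_mu k p q x hμ
  have hf : ∀ k x, ContinuousAt (fun z => oddThetaDeriv k x z) μ := fun k x =>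
    continuousAt_thetaDeriv_mu k _ _ x hμ
  unfold thetaDefect hirotaDefect
  fun_prop

lemma eventually_im_pos (hμ : 0 < μ.im) : ∀ᶠ z in nhds μ, 0 < z.im :=
  continuous_im.continuousAt.eventually_const_lt hμ

theorem thetaDefect_eq_zero (hμ : 0 < μ.im) (h₀ : thetaDeriv 0 p q 0 μ ≠ 0) :
    thetaDefect p q γ μ = 0 := by
  by_contra hdefect
  have hodd₁ : ∀ᶠ z in nhds μ, oddThetaDeriv 1 0 z = 0 := by
    filter_upwards [eventually_im_pos hμ,
      (continuousAt_thetaDefect_mu p q γ hμ).eventually_ne hdefect,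
      (continuousAt_thetaDeriv_mu 0 p q 0 hμ).eventually_ne h₀] with z hz hdefect_z h₀_z
    simpa only [mul_eq_zero, h₀_z, hdefect_z, false_or, or_false] using
      mul_thetaDefect_eq_zero p q γ hz
  have hodd₃ : oddThetaDeriv 3 0 μ = 0 := by
    have hheat := (hasDerivAt_thetaDeriv_mu 1 (-(1 / 2)) (1 / 2) 0 hμ).unique
      ((hasDerivAt_const μ (0 : ℂ)).congr_of_eventuallyEq hodd₁)
    exact (div_eq_zero_iff.mp hheat).resolve_right (by simp [Real.pi_ne_zero])
  apply hdefect
  simp only [thetaDefect, hirotaDefect, hodd₁.self_of_nhds, hodd₃]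
  ring

end ThetaDefect

section GeneralCharacteristics

/-- `w_{AB}` with real characteristics `p, q` in place of `A/K - 1/2, 1/2 - B/K`. -/
noncomputable def wTheta (p q : ℝ) (γ μ : ℂ) : ℂ :=
  Theta p q γ μ * deriv (fun z => Theta (-(1 / 2)) (1 / 2) z μ) 0 /
    (Theta p q 0 μ * Theta (-(1 / 2)) (1 / 2) γ μ)

/-- `Z_{AB}` with real characteristics `p, q` in place of `A/K - 1/2, 1/2 - B/K`. -/
noncomputable def ZTheta (p q : ℝ) (γ μ : ℂ) : ℂ :=
  wTheta p q γ μ / (2 * π * I) *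
    (deriv (fun z => Theta p q z μ) γ / Theta p q γ μ -
      deriv (fun z => Theta p q z μ) 0 / Theta p q 0 μ)

lemma thetaAB_zero_zero (K : ℕ) : thetaAB K 0 0 = Theta (-(1 / 2)) (1 / 2) := by
  ext γ μ
  simp only [thetaAB, Int.cast_zero, zero_div, zero_sub, sub_zero]

lemma wAB_eq_wTheta (K : ℕ) (A B : ℤ) : wAB K A B = wTheta (A / K - 1 / 2) (1 / 2 - B / K) := by
  ext γ μ
  simp only [wAB, thetaAB_zero_zero]
  rfl

lemma ZAB_eq_ZTheta (K : ℕ) (A B : ℤ) : ZAB K A B = ZTheta (A / K - 1 / 2) (1 / 2 - B / K) := by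
  ext γ μ
  simp only [ZAB, wAB_eq_wTheta]
  rfl

variable (p q : ℝ) {γ μ : ℂ}

lemma wTheta_eq (γ : ℂ) (hμ : 0 < μ.im) :
    wTheta p q γ μ = thetaDeriv 0 p q γ μ * oddThetaDeriv 1 0 μ /
      (thetaDeriv 0 p q 0 μ * oddThetaDeriv 0 γ μ) := by
  rw [wTheta, deriv_Theta _ _ _ hμ]
  simp only [Theta_eq_thetaDeriv_zero, oddThetaDeriv]

lemma ZTheta_eq (hμ : 0 < μ.im) (hγ : thetaDeriv 0 p q γ μ ≠ 0) (h₀ : thetaDeriv 0 p q 0 μ ≠ 0) :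
    ZTheta p q γ μ = oddThetaDeriv 1 0 μ / (2 * π * I * thetaDeriv 0 p q 0 μ ^ 2) *
      ((thetaDeriv 1 p q γ μ * thetaDeriv 0 p q 0 μ - thetaDeriv 0 p q γ μ * thetaDeriv 1 p q 0 μ) /
        oddThetaDeriv 0 γ μ) := by
  rw [ZTheta, wTheta_eq p q γ hμ, deriv_Theta _ _ _ hμ, deriv_Theta _ _ _ hμ]
  simp only [Theta_eq_thetaDeriv_zero]
  field_simp

lemma hasDerivAt_wTheta_mu (hμ : 0 < μ.im) (hodd : oddThetaDeriv 0 γ μ ≠ 0)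
    (h₀ : thetaDeriv 0 p q 0 μ ≠ 0) :
    HasDerivAt (fun m => wTheta p q γ m)
      (((thetaDeriv 2 p q γ μ * oddThetaDeriv 1 0 μ + thetaDeriv 0 p q γ μ * oddThetaDeriv 3 0 μ) *
          (thetaDeriv 0 p q 0 μ * oddThetaDeriv 0 γ μ) -
        thetaDeriv 0 p q γ μ * oddThetaDeriv 1 0 μ *
          (thetaDeriv 2 p q 0 μ * oddThetaDeriv 0 γ μ +
            thetaDeriv 0 p q 0 μ * oddThetaDeriv 2 γ μ)) /
        (4 * π * I * (thetaDeriv 0 p q 0 μ * oddThetaDeriv 0 γ μ) ^ 2)) μ := by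
  have hf : ∀ k x, HasDerivAt (fun z => oddThetaDeriv k x z)
      (oddThetaDeriv (k + 2) x μ / (4 * π * I)) μ := fun k x => hasDerivAt_thetaDeriv_mu k _ _ x hμ
  have hquot := ((hasDerivAt_thetaDeriv_mu 0 p q γ hμ).mul (hf 1 0)).div
    ((hasDerivAt_thetaDeriv_mu 0 p q 0 hμ).mul (hf 0 γ)) (mul_ne_zero h₀ hodd)
  refine (hquot.congr_of_eventuallyEq
    ((eventually_im_pos hμ).mono fun m hm => wTheta_eq p q γ hm)).congr_deriv ?_
  simp only [Pi.mul_apply, zero_add, Nat.reduceAdd]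
  field_simp

lemma hasDerivAt_ZTheta_gamma (hμ : 0 < μ.im) (hodd : oddThetaDeriv 0 γ μ ≠ 0)
    (hγ : thetaDeriv 0 p q γ μ ≠ 0) (h₀ : thetaDeriv 0 p q 0 μ ≠ 0) :
    HasDerivAt (fun z => ZTheta p q z μ)
      (oddThetaDeriv 1 0 μ / (2 * π * I * thetaDeriv 0 p q 0 μ ^ 2) *
        (((thetaDeriv 2 p q γ μ * thetaDeriv 0 p q 0 μ -
            thetaDeriv 1 p q γ μ * thetaDeriv 1 p q 0 μ) * oddThetaDeriv 0 γ μ -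
          (thetaDeriv 1 p q γ μ * thetaDeriv 0 p q 0 μ -
            thetaDeriv 0 p q γ μ * thetaDeriv 1 p q 0 μ) * oddThetaDeriv 1 γ μ) /
          oddThetaDeriv 0 γ μ ^ 2)) γ := by
  have ht := fun k => hasDerivAt_thetaDeriv_gamma k p q γ hμ
  have hquot := ((((ht 1).mul_const (thetaDeriv 0 p q 0 μ)).sub
    ((ht 0).mul_const (thetaDeriv 1 p q 0 μ))).div
    (hasDerivAt_thetaDeriv_gamma 0 (-(1 / 2)) (1 / 2) γ hμ) hodd).const_mul
    (oddThetaDeriv 1 0 μ / (2 * π * I * thetaDeriv 0 p q 0 μ ^ 2))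
  exact hquot.congr_of_eventuallyEq
    (((ht 0).continuousAt.eventually_ne hγ).mono fun z hz => ZTheta_eq p q hμ hz h₀)

theorem wAB_mu_deriv_eq_ZAB_gamma_deriv_general (hμ : 0 < μ.im)
    (hodd : Theta (-(1 / 2)) (1 / 2) γ μ ≠ 0) (hγ : Theta p q γ μ ≠ 0) (h₀ : Theta p q 0 μ ≠ 0) :
    DifferentiableAt ℂ (fun m => wTheta p q γ m) μ ∧
    DifferentiableAt ℂ (fun z => ZTheta p q z μ) γ ∧
    deriv (fun m => wTheta p q γ m) μ = deriv (fun z => ZTheta p q z μ) γ := by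
  rw [Theta_eq_thetaDeriv_zero] at hodd hγ h₀
  rw [← oddThetaDeriv] at hodd
  have hw := hasDerivAt_wTheta_mu p q hμ hodd h₀
  have hZ := hasDerivAt_ZTheta_gamma p q hμ hodd hγ h₀
  have hdefect := thetaDefect_eq_zero p q γ hμ h₀
  refine ⟨hw.differentiableAt, hZ.differentiableAt, ?_⟩
  rw [hw.deriv, hZ.deriv]
  have hπ : (π : ℂ) ≠ 0 := ofReal_ne_zero.mpr Real.pi_ne_zero
  rw [thetaDefect, hirotaDefect] at hdefect
  field_simp
  linear_combination -2 * hdefect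

end GeneralCharacteristics

/-- `∂_μ w_{AB}(γ;μ) = ∂_γ Z_{AB}(γ;μ)` (both derivatives exist). -/
theorem wAB_mu_deriv_eq_ZAB_gamma_deriv (K : ℕ) (hK : 2 ≤ K) (A B : ℤ)
    (hAB : ¬(A % (K : ℤ) = 0 ∧ B % (K : ℤ) = 0)) (γ μ : ℂ) (hμ : 0 < μ.im)
    (h00 : thetaAB K 0 0 γ μ ≠ 0) (hγ : thetaAB K A B γ μ ≠ 0)
    (h0 : thetaAB K A B 0 μ ≠ 0) :
    DifferentiableAt ℂ (fun m => wAB K A B γ m) μ ∧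
    DifferentiableAt ℂ (fun z => ZAB K A B z μ) γ ∧
    deriv (fun m => wAB K A B γ m) μ = deriv (fun z => ZAB K A B z μ) γ := by
  simp only [wAB_eq_wTheta, ZAB_eq_ZTheta]
  rw [thetaAB_zero_zero] at h00
  exact wAB_mu_deriv_eq_ZAB_gamma_deriv_general _ _ hμ h00 hγ h0
end

section
/- Let K ≥ 2 be an integer, μ ∈ ℂ with Im μ > 0, and γ ∈ ℂ such that θ_{[00]}(γ;μ) ≠ 0 and θ_{[AB]}(0;μ) ≠ 0 for all 0 ≤ A,B ≤ K−1 with (A,B) ≠ (0,0). Then the elliptic r-matrix is antisymmetric under simultaneous exchange of tensor factors and sign change of the argument: ∑_{0≤A,B≤K−1,(A,B)≠(0,0)} w_{AB}(γ;μ)·(σ_{AB} ⊗ σ^{AB}) = −∑_{0≤A,B≤K−1,(A,B)≠(0,0)} w_{AB}(−γ;μ)·(σ^{AB} ⊗ σ_{AB}), i.e. r^{12}(γ) = −r^{21}(−γ). -/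
open Complex Filter

/-!
The pairs `(A, B)` are only a choice of representatives: `w_{AB}`, `σ_{AB}` and `σ^{AB}` depend on
`A` and `B` modulo `K`, so the sum over the nonzero classes is invariant under `(A, B) ↦ (-A, -B)`.
This substitution carries `σ^{AB} ⊗ σ_{AB}` to `σ_{AB} ⊗ σ^{AB}`, since `ε^{-AB}` is even in
`(A, B)`. On the theta functions, changing the sign of `γ` and of both indices multiplies
`θ_{[AB]}` by a factor independent of `γ`, which cancels in `w_{AB}`; what remains is the sign
coming from the oddness of `θ_{[00]}` in the denominator, so `w_{-A,-B}(-γ) = -w_{AB}(γ)`.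
-/

section PeriodicSums

variable {M : Type*} [AddCommMonoid M] {K : ℕ}

lemma sum_range_neg_of_periodic {f : ℤ → M} (hf : Function.Periodic f K) :
    ∑ A ∈ Finset.range K, f (-A) = ∑ A ∈ Finset.range K, f A := by
  cases K with
  | zero => simp only [Finset.range_zero, Finset.sum_empty]
  | succ n =>
    rw [Finset.sum_range_succ', Finset.sum_range_succ', ← Finset.sum_range_reflect]
    congr 1
    refine Finset.sum_congr rfl fun j hj => ?_
    have hjn : j < n := Finset.mem_range.mp hj
    rw [← hf]
    congr 1
    omega

lemma sum_range_sum_range_neg_of_periodic {f : ℤ → ℤ → M}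
    (hleft : ∀ B, Function.Periodic (fun A => f A B) K)
    (hright : ∀ A, Function.Periodic (f A) K) :
    ∑ A ∈ Finset.range K, ∑ B ∈ Finset.range K, f (-A) (-B) =
      ∑ A ∈ Finset.range K, ∑ B ∈ Finset.range K, f A B := by
  rw [Finset.sum_congr rfl fun (A : ℕ) _ => sum_range_neg_of_periodic (hright (-A))]
  refine sum_range_neg_of_periodic (f := fun A => ∑ B ∈ Finset.range K, f A B) fun A => ?_
  exact Finset.sum_congr rfl fun B _ => hleft B A

lemma punctured_sum_neg_of_periodic {f : ℤ → ℤ → M}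
    (hleft : ∀ B, Function.Periodic (fun A => f A B) K)
    (hright : ∀ A, Function.Periodic (f A) K) :
    (∑ A ∈ Finset.range K, ∑ B ∈ Finset.range K, if A = 0 ∧ B = 0 then 0 else f (-A) (-B)) =
      ∑ A ∈ Finset.range K, ∑ B ∈ Finset.range K, if A = 0 ∧ B = 0 then 0 else f A B := by
  -- Excluding the class of `(0, 0)` modulo `K` keeps the summand periodic.
  let g (A B : ℤ) : M := if (K : ℤ) ∣ A ∧ (K : ℤ) ∣ B then 0 else f A B
  have hg_left (B : ℤ) : Function.Periodic (fun A => g A B) K := fun A => by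
    simp only [g, dvd_add_self_right, hleft B A]
  have hg_right (A : ℤ) : Function.Periodic (g A) K := fun B => by
    simp only [g, dvd_add_self_right, hright A B]
  have dvd_iff {A : ℕ} (hA : A ∈ Finset.range K) : (K : ℤ) ∣ A ↔ A = 0 := by
    rw [Int.natCast_dvd_natCast, Nat.dvd_iff_mod_eq_zero, Nat.mod_eq_of_lt (Finset.mem_range.mp hA)]
  have punctured_eq (h : ℤ → ℤ → M) :
      (∑ A ∈ Finset.range K, ∑ B ∈ Finset.range K, if A = 0 ∧ B = 0 then 0 else h A B) =
        ∑ A ∈ Finset.range K, ∑ B ∈ Finset.range K,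
          if (K : ℤ) ∣ A ∧ (K : ℤ) ∣ B then 0 else h A B :=
    Finset.sum_congr rfl fun A hA => Finset.sum_congr rfl fun B hB => by
      simp only [dvd_iff hA, dvd_iff hB]
  rw [punctured_eq f, punctured_eq fun A B => f (-A) (-B)]
  simpa only [g, dvd_neg] using sum_range_sum_range_neg_of_periodic hg_left hg_right

end PeriodicSums

section Theta

lemma Theta_neg (p q : ℝ) (γ μ : ℂ) : Theta (-p) (-q) (-γ) μ = Theta p q γ μ := by
  refine ((Equiv.neg ℤ).tsum_eq _).symm.trans (tsum_congr fun m => ?_)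
  simp only [Equiv.neg_apply]
  push_cast
  ring_nf

lemma Theta_add_intCast_left (p q : ℝ) (k : ℤ) (γ μ : ℂ) :
    Theta (p + k) q γ μ = Theta p q γ μ := by
  refine ((Equiv.subRight k).tsum_eq _).symm.trans (tsum_congr fun m => ?_)
  simp only [Equiv.subRight_apply]
  push_cast
  ring_nf

lemma Theta_add_intCast_right (p q : ℝ) (n : ℤ) (γ μ : ℂ) :
    Theta p (q + n) γ μ = exp (2 * Real.pi * I * p * n) * Theta p q γ μ := by
  unfold Theta
  rw [← tsum_mul_left]
  refine tsum_congr fun m => ?_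
  rw [← exp_add, exp_eq_exp_iff_exists_int]
  refine ⟨m * n, ?_⟩
  push_cast
  ring

variable (K : ℕ)

lemma thetaAB_neg (A B : ℤ) (γ μ : ℂ) :
    thetaAB K (-A) (-B) (-γ) μ =
      exp (-(2 * Real.pi * I * (A / K - 1 / 2))) * thetaAB K A B γ μ := by
  have hp : (((-A : ℤ) : ℝ) / K - 1 / 2 : ℝ) = -(A / K - 1 / 2) + (-1 : ℤ) := by
    push_cast
    ring
  have hq : (1 / 2 - ((-B : ℤ) : ℝ) / K : ℝ) = -(1 / 2 - B / K) + (1 : ℤ) := by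
    push_cast
    ring
  unfold thetaAB
  rw [hp, hq, Theta_add_intCast_left, Theta_add_intCast_right, Theta_neg]
  push_cast
  ring_nf

lemma thetaAB_zero_zero_neg (γ μ : ℂ) :
    thetaAB K 0 0 (-γ) μ = -thetaAB K 0 0 γ μ := by
  have hexp : exp (-(2 * Real.pi * I * (((0 : ℤ) : ℂ) / K - 1 / 2))) = -1 := by
    rw [← exp_pi_mul_I]
    push_cast
    ring_nf
  simpa only [neg_zero, hexp, neg_one_mul] using thetaAB_neg K 0 0 γ μ

lemma wAB_neg (A B : ℤ) (γ μ : ℂ) :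
    wAB K (-A) (-B) (-γ) μ = -wAB K A B γ μ := by
  have htheta_zero := thetaAB_neg K A B 0 μ
  rw [neg_zero] at htheta_zero
  simp only [wAB, htheta_zero, thetaAB_neg, thetaAB_zero_zero_neg, mul_assoc,
    mul_div_mul_left _ _ (exp_ne_zero _), mul_neg, div_neg]

variable {K} [NeZero K]

lemma thetaAB_add_left (A B : ℤ) (γ μ : ℂ) :
    thetaAB K (A + K) B γ μ = thetaAB K A B γ μ := by
  have hK : (K : ℝ) ≠ 0 := NeZero.ne _
  unfold thetaAB
  rw [← Theta_add_intCast_left (A / K - 1 / 2) _ 1]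
  congr 1
  push_cast
  field_simp
  ring

lemma thetaAB_add_right (A B : ℤ) (γ μ : ℂ) :
    thetaAB K A (B + K) γ μ =
      exp (-(2 * Real.pi * I * (A / K - 1 / 2))) * thetaAB K A B γ μ := by
  have hK : (K : ℝ) ≠ 0 := NeZero.ne _
  have hq : (1 / 2 - ((B + K : ℤ) : ℝ) / K : ℝ) = 1 / 2 - B / K + (-1 : ℤ) := by
    push_cast
    field_simp
    ring
  unfold thetaAB
  rw [hq, Theta_add_intCast_right]
  push_cast
  ring_nf

lemma wAB_periodic_left (B : ℤ) (γ μ : ℂ) :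
    Function.Periodic (fun A => wAB K A B γ μ) K := fun A => by
  simp only [wAB, thetaAB_add_left]

lemma wAB_periodic_right (A : ℤ) (γ μ : ℂ) :
    Function.Periodic (fun B => wAB K A B γ μ) K := fun B => by
  simp only [wAB, thetaAB_add_right, mul_assoc, mul_div_mul_left _ _ (exp_ne_zero _)]

end Theta

section Sigma

open Kronecker

variable {K : ℕ}

lemma sigmaAB_periodic_left (B : ℤ) : Function.Periodic (fun A => sigmaAB K A B) K := fun A => by
  simp only [sigmaAB, Int.add_emod_right]

lemma sigmaAB_periodic_right (A : ℤ) : Function.Periodic (sigmaAB K A) K := fun B => by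
  simp only [sigmaAB, Int.add_emod_right]

lemma sigmaDualAB_neg (A B : ℤ) :
    sigmaDualAB K (-A) (-B) = (epsK K ^ (-(A * B)) / (K : ℂ)) • sigmaAB K A B := by
  simp only [sigmaDualAB, neg_mul_neg, neg_neg]

lemma sigmaDualAB_neg_kronecker_sigmaAB_neg (A B : ℤ) :
    sigmaDualAB K (-A) (-B) ⊗ₖ sigmaAB K (-A) (-B) = sigmaAB K A B ⊗ₖ sigmaDualAB K A B := by
  rw [sigmaDualAB_neg, sigmaDualAB, Matrix.smul_kronecker, Matrix.kronecker_smul]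

variable [NeZero K]

lemma epsK_zpow_periodic : Function.Periodic (fun n : ℤ => epsK K ^ n) K := fun n => by
  have hroot : epsK K ^ K = 1 := (isPrimitiveRoot_exp K (NeZero.ne K)).pow_eq_one
  simp only [zpow_add₀ (show epsK K ≠ 0 from exp_ne_zero _), zpow_natCast, hroot, mul_one]

lemma sigmaDualAB_periodic_left (B : ℤ) :
    Function.Periodic (fun A => sigmaDualAB K A B) K := fun A => by
  have heps : epsK K ^ (-((A + K) * B)) = epsK K ^ (-(A * B)) := by
    convert (epsK_zpow_periodic (K := K)).zsmul (-B) (-(A * B)) using 2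
    rw [smul_eq_mul]
    ring
  simp only [sigmaDualAB, heps, neg_add', (sigmaAB_periodic_left _).sub_eq]

lemma sigmaDualAB_periodic_right (A : ℤ) : Function.Periodic (sigmaDualAB K A) K := fun B => by
  have heps : epsK K ^ (-(A * (B + K))) = epsK K ^ (-(A * B)) := by
    convert (epsK_zpow_periodic (K := K)).zsmul (-A) (-(A * B)) using 2
    rw [smul_eq_mul]
    ring
  simp only [sigmaDualAB, heps, neg_add', (sigmaAB_periodic_right _).sub_eq]

end Sigma

open Kronecker in
/-- antisymmetry of the elliptic r-matrix: `r^{12}(γ) = −r^{21}(−γ)`. -/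
theorem rmat_antisymmetry (K : ℕ) (hK : 2 ≤ K) (μ γ : ℂ) (hμ : 0 < μ.im)
    (h00 : thetaAB K 0 0 γ μ ≠ 0)
    (h0 : ∀ A B : ℕ, A < K → B < K → ¬(A = 0 ∧ B = 0) → thetaAB K A B 0 μ ≠ 0) :
    (∑ A ∈ Finset.range K, ∑ B ∈ Finset.range K,
        if A = 0 ∧ B = 0 then 0
        else wAB K A B γ μ • (sigmaAB K A B ⊗ₖ sigmaDualAB K A B))
      = -∑ A ∈ Finset.range K, ∑ B ∈ Finset.range K,
          if A = 0 ∧ B = 0 then 0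
          else wAB K A B (-γ) μ • (sigmaDualAB K A B ⊗ₖ sigmaAB K A B) := by
  have : NeZero K := ⟨by omega⟩
  let f (A B : ℤ) := wAB K A B (-γ) μ • (sigmaDualAB K A B ⊗ₖ sigmaAB K A B)
  have hleft (B : ℤ) : Function.Periodic (fun A => f A B) K := fun A => by
    simp only [f, wAB_periodic_left B _ _ A, sigmaDualAB_periodic_left B A,
      sigmaAB_periodic_left B A]
  have hright (A : ℤ) : Function.Periodic (f A) K := fun B => by
    simp only [f, wAB_periodic_right A _ _ B, sigmaDualAB_periodic_right A B,
      sigmaAB_periodic_right A B]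
  have hneg (A B : ℤ) :
      f (-A) (-B) = -(wAB K A B γ μ • (sigmaAB K A B ⊗ₖ sigmaDualAB K A B)) := by
    simp only [f, wAB_neg, sigmaDualAB_neg_kronecker_sigmaAB_neg, neg_smul]
  rw [← punctured_sum_neg_of_periodic hleft hright]
  simp only [hneg, ← Finset.sum_neg_distrib, neg_ite, neg_zero, neg_neg]
end
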